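/- arXiv:2604.11166 — 2 statements merged into one kernel-verified Lean document; each statement's English description precedes it below -/
import Mathlib

section
/- Let G be a finite connected multigraph and set C_G = 2·(#E(G) + 1)·(#V(G) + 1). Then for every divisor D on G, r(D) ≥ deg(D) − C_G. -/
/-!
The heart of the matter is that every divisor `D` with `deg D ≥ #V · (2 #E + 1)` is linearly
equivalent to an effective one (`linSys_nonempty`). A function on the vertices that is harmonic for
the Laplacian of a connected graph is constant by the maximum principle
(`eq_of_harmonic`); by duality the real span of the chip-firing divisors is therefore the whole
hyperplane of degree-zero real divisors (`mem_span_chip`). With `n = #V`, write the real divisor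
`D - (deg D / n) · 1` as `∑ c v • Δ_v` and subtract from `D` the integral combination with
coefficients `⌊c v⌋`. The result is `deg D / n + ∑ fract (c v) • Δ_v`, whose value at `u` is at
least `deg D / n` minus the number of non-loop edges at `u`, hence nonnegative.

If `deg D ≥ C_G`, this applies to `D - E` for every effective `E` of degree `deg D - C_G`, which
gives the bound on the rank; if `deg D < C_G`, the bound only says that the rank is at least `-1`.
-/


open Filter

/-- The degree of a divisor on a finite vertex set. -/
def divDeg {V : Type*} [Fintype V] (D : V → ℤ) : ℤ := ∑ v, D v

/-- A divisor is effective if all its coefficients are nonnegative. -/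
def divEffective {V : Type*} (D : V → ℤ) : Prop := ∀ v, 0 ≤ D v

/-- A finite multigraph: a symmetric edge-multiplicity function on a finite
vertex set, where `m v v` counts the loops at `v`. -/
structure Multigraph (V : Type*) [Fintype V] where
  m : V → V → ℕ
  symm : ∀ u v, m u v = m v u

namespace Multigraph

variable {V : Type*} [Fintype V] [DecidableEq V] (G : Multigraph V)

/-- Connectedness of the simple graph having an edge between distinct `u, v`
whenever `m u v > 0`. -/
def Connected : Prop :=
  (SimpleGraph.fromRel fun u v => 0 < G.m u v).Connected

/-- The valence of a vertex: each loop counts twice. -/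
def val (v : V) : ℕ := 2 * G.m v v + ∑ u ∈ Finset.univ.erase v, G.m v u

/-- The chip-firing divisor of a vertex `v`. -/
def chip (v : V) : V → ℤ := fun u =>
  if u = v then -(∑ w ∈ Finset.univ.erase v, (G.m v w : ℤ)) else (G.m v u : ℤ)

/-- The subgroup of principal divisors, generated by chip-firing divisors. -/
def prin : AddSubgroup (V → ℤ) := AddSubgroup.closure (Set.range G.chip)

/-- Linear equivalence of divisors. -/
def LinEquiv (D D' : V → ℤ) : Prop := D - D' ∈ G.prin

/-- The complete linear series of `D`: effective divisors linearly equivalent to `D`. -/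
def linSys (D : V → ℤ) : Set (V → ℤ) := {E | divEffective E ∧ G.LinEquiv E D}

open scoped Classical in
/-- The Baker–Norine rank: `-1` if `|D|` is empty, and otherwise the largest
`d ≥ 0` such that `|D - E|` is nonempty for every effective divisor `E` of
degree `d`. -/
noncomputable def rank (D : V → ℤ) : ℤ :=
  if (G.linSys D).Nonempty then
    sSup {d : ℤ | 0 ≤ d ∧ ∀ E : V → ℤ, divEffective E → divDeg E = d →
      (G.linSys (D - E)).Nonempty}
  else -1

/-- The number of edges of the multigraph. -/
def numEdges : ℕ :=
  (∑ v, G.m v v) + (∑ v, ∑ u ∈ Finset.univ.erase v, G.m v u) / 2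

/-- The tropical volume of a divisor: `limsup_{ℓ → ∞} r(ℓ D)/ℓ`. -/
noncomputable def vol (D : V → ℤ) : ℝ :=
  Filter.limsup (fun ℓ : ℕ => (G.rank (fun v => (ℓ : ℤ) * D v) : ℝ) / ℓ) Filter.atTop

end Multigraph

namespace Multigraph

variable {V : Type*} [Fintype V] [DecidableEq V] (G : Multigraph V)

lemma chip_self (v : V) : G.chip v v = -(∑ w ∈ Finset.univ.erase v, (G.m v w : ℤ)) := by
  simp [chip]

lemma chip_of_ne {u v : V} (h : u ≠ v) : G.chip v u = (G.m v u : ℤ) := by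
  simp [chip, h]

lemma divDeg_chip (v : V) : divDeg (G.chip v) = 0 := by
  unfold divDeg
  rw [← Finset.add_sum_erase _ _ (Finset.mem_univ v), chip_self,
    Finset.sum_congr rfl (fun w hw => G.chip_of_ne (Finset.ne_of_mem_erase hw))]
  ring

lemma divDeg_of_mem_prin {P : V → ℤ} (hP : P ∈ G.prin) : divDeg P = 0 := by
  induction hP using AddSubgroup.closure_induction with
  | mem x hx => obtain ⟨v, rfl⟩ := hx; exact G.divDeg_chip v
  | zero => simp [divDeg]
  | add x y _ _ hx hy =>
    simp only [divDeg, Pi.add_apply, Finset.sum_add_distrib] at *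
    rw [hx, hy, add_zero]
  | neg x _ hx =>
    simp only [divDeg, Pi.neg_apply, Finset.sum_neg_distrib] at *
    rw [hx, neg_zero]

/-- Maximum principle: on a connected multigraph, a real function orthogonal to all chip-firing
divisors (that is, in the kernel of the Laplacian) is constant. -/
lemma eq_of_harmonic (hG : G.Connected) (φ : V → ℝ)
    (hφ : ∀ v, ∑ u, φ u * (G.chip v u : ℝ) = 0) (a b : V) : φ a = φ b := by
  have : Nonempty V := ⟨a⟩
  obtain ⟨p, hp⟩ := Finite.exists_max φ
  have step : ∀ v w, (SimpleGraph.fromRel fun u v => 0 < G.m u v).Adj v w →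
      φ v = φ p → φ w = φ p := by
    intro v w hvw hv
    rw [SimpleGraph.fromRel_adj] at hvw
    obtain ⟨hne, hm⟩ := hvw
    have hpos : 0 < G.m v w := by
      rcases hm with h | h
      · exact h
      · rwa [G.symm]
    have h1 : ∑ u ∈ Finset.univ.erase v, (G.m v u : ℝ) * (φ v - φ u) = 0 := by
      have h := hφ v
      rw [← Finset.add_sum_erase _ _ (Finset.mem_univ v), chip_self] at h
      have h2 : ∑ u ∈ Finset.univ.erase v, φ u * (G.chip v u : ℝ)
          = ∑ u ∈ Finset.univ.erase v, (G.m v u : ℝ) * φ u :=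
        Finset.sum_congr rfl fun u hu => by
          rw [G.chip_of_ne (Finset.ne_of_mem_erase hu), Int.cast_natCast, mul_comm]
      push_cast at h
      simp only [mul_sub, Finset.sum_sub_distrib, ← Finset.sum_mul]
      linarith
    rw [Finset.sum_eq_zero_iff_of_nonneg] at h1
    · have h3 := h1 w (Finset.mem_erase.2 ⟨hne.symm, Finset.mem_univ w⟩)
      have h4 : (G.m v w : ℝ) ≠ 0 := by exact_mod_cast hpos.ne'
      have h5 := (mul_eq_zero.1 h3).resolve_left h4
      linarith
    · intro u _
      have := hp u
      exact mul_nonneg (Nat.cast_nonneg _) (by linarith)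
  have all : ∀ w, φ w = φ p := by
    intro w
    obtain ⟨walk⟩ := hG.preconnected w p
    induction walk with
    | nil => rfl
    | cons h _ ih => exact step _ _ h.symm (ih hp step)
  rw [all a, all b]

/-- On a connected multigraph, every real divisor of degree zero is a real linear combination of
chip-firing divisors. -/
lemma mem_span_chip (hG : G.Connected) (x : V → ℝ) (hx : ∑ v, x v = 0) :
    x ∈ Submodule.span ℝ (Set.range fun v => fun u => (G.chip v u : ℝ)) := by
  by_contra hn
  obtain ⟨f, hfx, hf⟩ := Submodule.exists_le_ker_of_notMem hn
  have hrep : ∀ y : V → ℝ, f y = ∑ u, f (Pi.single u 1) * y u := by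
    intro y
    rw [LinearMap.pi_apply_eq_sum_univ f y]
    refine Finset.sum_congr rfl fun u _ => ?_
    rw [smul_eq_mul, mul_comm]
    congr 2
    ext w
    simp [Pi.single_apply, eq_comm]
  have hharm : ∀ v, ∑ u, f (Pi.single u 1) * (G.chip v u : ℝ) = 0 := by
    intro v
    rw [← hrep fun u => (G.chip v u : ℝ)]
    exact LinearMap.mem_ker.1 (hf (Submodule.subset_span ⟨v, rfl⟩))
  obtain ⟨p⟩ := hG.nonempty
  apply hfx
  rw [hrep, Finset.sum_congr rfl (fun u _ => by
    rw [G.eq_of_harmonic hG (fun u => f (Pi.single u 1)) hharm u p]), ← Finset.mul_sum, hx,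
    mul_zero]

/-- Since `numEdges` halves the sum of the non-loop valences by truncating division, this bound is
weaker than the sharp `≤ numEdges`, but it needs no parity argument. -/
lemma nonloop_val_le (u : V) :
    ∑ w ∈ Finset.univ.erase u, G.m u w ≤ 2 * G.numEdges + 1 := by
  have h := Finset.single_le_sum (f := fun v => ∑ w ∈ Finset.univ.erase v, G.m v w)
    (fun _ _ => Nat.zero_le _) (Finset.mem_univ u)
  unfold numEdges
  omega

/-- A divisor of large degree is linearly equivalent to an effective one, obtained by rounding down
the coefficients of a real firing script that makes the divisor constant. -/
lemma linSys_nonempty (hG : G.Connected) (D : V → ℤ)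
    (hD : (Fintype.card V : ℤ) * (2 * G.numEdges + 1) ≤ divDeg D) : (G.linSys D).Nonempty := by
  have := hG.nonempty
  have hn : (0 : ℝ) < Fintype.card V := by exact_mod_cast Fintype.card_pos
  set a : ℝ := (divDeg D : ℝ) / Fintype.card V with ha
  have hx : ∑ v, ((D v : ℝ) - a) = 0 := by
    rw [Finset.sum_sub_distrib, Finset.sum_const, Finset.card_univ, nsmul_eq_mul, ha,
      mul_div_cancel₀ _ hn.ne']
    simp [divDeg]
  obtain ⟨c, hc⟩ := (Submodule.mem_span_range_iff_exists_fun ℝ).1 (G.mem_span_chip hG _ hx)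
  have hP : ∑ v, ⌊c v⌋ • G.chip v ∈ G.prin :=
    AddSubgroup.sum_mem _ fun v _ =>
      AddSubgroup.zsmul_mem _ (AddSubgroup.subset_closure (Set.mem_range_self v)) _
  refine ⟨D - ∑ v, ⌊c v⌋ • G.chip v, fun u => ?_, ?_⟩
  · have hcu : ∑ v, c v * (G.chip v u : ℝ) = D u - a := by
      simpa [Finset.sum_apply] using congrFun hc u
    have hval : ((D - ∑ v, ⌊c v⌋ • G.chip v) u : ℝ)
        = a + ∑ v, Int.fract (c v) * (G.chip v u : ℝ) := by
      simp only [Int.fract, sub_mul, Finset.sum_sub_distrib, hcu]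
      simp only [Pi.sub_apply, Finset.sum_apply, Pi.smul_apply, smul_eq_mul]
      push_cast
      ring
    -- Only the term `v = u` can be negative, and its coefficient is less than one.
    have hlow : -(∑ w ∈ Finset.univ.erase u, (G.m u w : ℝ))
        ≤ ∑ v, Int.fract (c v) * (G.chip v u : ℝ) := by
      rw [← Finset.add_sum_erase _ _ (Finset.mem_univ u)]
      have h1 : 0 ≤ ∑ v ∈ Finset.univ.erase u, Int.fract (c v) * (G.chip v u : ℝ) := by
        refine Finset.sum_nonneg fun v hv => mul_nonneg (Int.fract_nonneg _) ?_
        rw [G.chip_of_ne (Finset.ne_of_mem_erase hv).symm]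
        exact_mod_cast Nat.zero_le _
      have h2 : (0 : ℝ) ≤ ∑ w ∈ Finset.univ.erase u, (G.m u w : ℝ) :=
        Finset.sum_nonneg fun _ _ => Nat.cast_nonneg _
      rw [chip_self]
      push_cast
      nlinarith [Int.fract_lt_one (c u)]
    have hval_le : ∑ w ∈ Finset.univ.erase u, (G.m u w : ℝ) ≤ 2 * G.numEdges + 1 := by
      exact_mod_cast G.nonloop_val_le u
    have hage : (2 * G.numEdges + 1 : ℝ) ≤ a := by
      rw [ha, le_div_iff₀ hn, mul_comm]
      exact_mod_cast hD
    have : (0 : ℝ) ≤ ((D - ∑ v, ⌊c v⌋ • G.chip v) u : ℝ) := by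
      rw [hval]; linarith
    exact_mod_cast this
  · unfold LinEquiv
    rw [sub_sub_cancel_left]
    exact neg_mem hP

lemma divDeg_nonneg_of_linSys {D : V → ℤ} (h : (G.linSys D).Nonempty) : 0 ≤ divDeg D := by
  obtain ⟨E, hE, hED⟩ := h
  have h0 := G.divDeg_of_mem_prin hED
  have h1 : 0 ≤ divDeg E := Finset.sum_nonneg fun v _ => hE v
  simp only [divDeg, Pi.sub_apply, Finset.sum_sub_distrib] at *
  linarith

/-- The set whose supremum defines the rank is bounded above by `deg D`, so that the integer `sSup`
is a genuine supremum as soon as the set is nonempty. -/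
lemma bddAbove_rank_set [Nonempty V] (D : V → ℤ) :
    BddAbove {d : ℤ | 0 ≤ d ∧ ∀ E : V → ℤ, divEffective E → divDeg E = d →
      (G.linSys (D - E)).Nonempty} := by
  refine ⟨divDeg D, fun d hd => ?_⟩
  obtain ⟨hd0, hd⟩ := hd
  obtain ⟨p⟩ := ‹Nonempty V›
  have hdeg : divDeg (Pi.single p d : V → ℤ) = d := by simp [divDeg]
  have hnn := G.divDeg_nonneg_of_linSys
    (hd (Pi.single p d) (fun v => (Pi.single_nonneg.2 hd0 : (0 : V → ℤ) ≤ Pi.single p d) v) hdeg)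
  simp only [divDeg, Pi.sub_apply, Finset.sum_sub_distrib] at *
  linarith

lemma neg_one_le_rank [Nonempty V] (D : V → ℤ) : -1 ≤ G.rank D := by
  unfold rank
  split_ifs
  · -- On the empty set the integer `sSup` is `0`, so membership of `0` need not be checked.
    rcases Set.eq_empty_or_nonempty {d : ℤ | 0 ≤ d ∧ ∀ E : V → ℤ, divEffective E →
        divDeg E = d → (G.linSys (D - E)).Nonempty} with h | ⟨d, hd⟩
    · rw [h, Int.csSup_empty]; norm_num
    · have := le_csSup (G.bddAbove_rank_set D) hd
      have := hd.1
      linarith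
  · exact le_rfl

end Multigraph

/-- With `C_G = 2·(#E(G)+1)·(#V(G)+1)`, one has `r(D) ≥ deg(D) - C_G` for
every divisor `D`. -/
theorem rank_ge_deg_sub_const {V : Type*} [Fintype V] [DecidableEq V]
    (G : Multigraph V) (hG : G.Connected) (D : V → ℤ) :
    divDeg D - ((2 * (G.numEdges + 1) * (Fintype.card V + 1) : ℕ) : ℤ) ≤ G.rank D := by
  have := hG.nonempty
  have hC : (Fintype.card V : ℤ) * (2 * G.numEdges + 1)
      ≤ ((2 * (G.numEdges + 1) * (Fintype.card V + 1) : ℕ) : ℤ) := by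
    push_cast
    nlinarith [Int.natCast_nonneg (Fintype.card V), Int.natCast_nonneg G.numEdges]
  generalize ((2 * (G.numEdges + 1) * (Fintype.card V + 1) : ℕ) : ℤ) = C at hC ⊢
  by_cases hlt : divDeg D < C
  · have := G.neg_one_le_rank D
    linarith
  · push Not at hlt
    unfold Multigraph.rank
    rw [if_pos (G.linSys_nonempty hG D (hC.trans hlt))]
    refine le_csSup (G.bddAbove_rank_set D) ⟨by linarith, fun E _ hE => ?_⟩
    apply G.linSys_nonempty hG
    have : divDeg (D - E) = divDeg D - divDeg E := by simp [divDeg]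
    linarith
end

section
/- Let G be a finite connected multigraph with C_G = 2·(#E(G) + 1)·(#V(G) + 1), and let D be a divisor on G with deg(D) ≥ 2·C_G. Then there exists an effective divisor E linearly equivalent to D such that E(v) ≥ val(v) for every vertex v of G. -/
/-!
The proof rounds a rational potential. On a connected graph the Laplacian
`L f (v) = ∑ u, m(v,u) (f v - f u)` maps onto the functions of total mass zero: by the maximum
principle its kernel consists of the constants, so `f ↦ L f + (∑ f) · 1` is injective, hence
surjective. Spread the degree of `D` as the rational divisor
`t v = 2 val(v) + (deg D - 2 ∑ val) / #V`, which satisfies `t ≥ 2 val` because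
`2 ∑ val ≤ deg D`, and solve `L f = D - t` over `ℚ`. Firing each `v` exactly `⌊f v⌋` times turns
`D` into `E = t + L (f - ⌊f⌋)`. All values of `f - ⌊f⌋` lie in `[0, 1)`, so
`L (f - ⌊f⌋) (v) ≥ -val(v)`, and therefore `E ≥ val`.
-/

open Filter

namespace Multigraph

/-- The Laplacian of `G` on rational functions, `L f (v) = ∑ u, m(v,u) (f v - f u)`. It is minus
the chip-firing operator, and loops do not contribute. -/
def lap {V : Type*} [Fintype V] (G : Multigraph V) : (V → ℚ) →ₗ[ℚ] (V → ℚ) where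
  toFun f v := ∑ u, (G.m v u : ℚ) * (f v - f u)
  map_add' f g := by
    ext v
    simp only [Pi.add_apply, ← Finset.sum_add_distrib]
    exact Finset.sum_congr rfl fun u _ => by ring
  map_smul' c f := by
    ext v
    simp only [Pi.smul_apply, smul_eq_mul, RingHom.id_apply, Finset.mul_sum]
    exact Finset.sum_congr rfl fun u _ => by ring

lemma lap_apply {V : Type*} [Fintype V] (G : Multigraph V) (f : V → ℚ) (v : V) :
    G.lap f v = ∑ u, (G.m v u : ℚ) * (f v - f u) := rfl

lemma sum_lap {V : Type*} [Fintype V] (G : Multigraph V) (f : V → ℚ) :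
    ∑ v, G.lap f v = 0 := by
  have h : ∑ v, G.lap f v = -∑ v, G.lap f v := by
    simp only [lap_apply]
    conv_lhs => rw [Finset.sum_comm]
    simp only [← Finset.sum_neg_distrib]
    refine Finset.sum_congr rfl fun u _ => Finset.sum_congr rfl fun v _ => ?_
    rw [G.symm v u]
    ring
  linarith

/-- Maximum principle: harmonic functions on a connected graph are constant. -/
lemma eq_of_lap_eq_zero {V : Type*} [Fintype V] [DecidableEq V] (G : Multigraph V)
    (hG : G.Connected) (f : V → ℚ) (hf : G.lap f = 0) : ∃ c, ∀ v, f v = c := by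
  have := hG.nonempty
  obtain ⟨v₀, hv₀⟩ := Finite.exists_max f
  have step : ∀ u w, (SimpleGraph.fromRel fun u v => 0 < G.m u v).Adj u w →
      f u = f v₀ → f w = f v₀ := by
    intro u w huw hu
    have hm : 0 < G.m u w := by
      rcases (SimpleGraph.fromRel_adj _ _ _).1 huw with ⟨-, h | h⟩
      · exact h
      · rwa [G.symm]
    have h0 : ∑ x, (G.m u x : ℚ) * (f u - f x) = 0 := congrFun hf u
    rw [Finset.sum_eq_zero_iff_of_nonneg] at h0
    · have h1 := h0 w (Finset.mem_univ _)
      have hm' : (G.m u w : ℚ) ≠ 0 := by exact_mod_cast hm.ne'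
      have := (mul_eq_zero.1 h1).resolve_left hm'
      linarith
    · intro x _
      exact mul_nonneg (Nat.cast_nonneg _) (by linarith [hv₀ x])
  refine ⟨f v₀, fun v => ?_⟩
  obtain ⟨p⟩ := hG.preconnected v₀ v
  have walk : ∀ a b, (SimpleGraph.fromRel fun u v => 0 < G.m u v).Walk a b →
      f a = f v₀ → f b = f v₀ := by
    intro a b p
    induction p with
    | nil => exact id
    | cons h _ ih => exact fun ha => ih (step _ _ h ha)
  exact walk _ _ p rfl

/-- On a connected graph every function of total mass zero is a Laplacian. -/
lemma exists_lap_eq {V : Type*} [Fintype V] [DecidableEq V] (G : Multigraph V)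
    (hG : G.Connected) (h : V → ℚ) (hh : ∑ v, h v = 0) : ∃ f, G.lap f = h := by
  have := hG.nonempty
  have hn : (Fintype.card V : ℚ) ≠ 0 := by exact_mod_cast Fintype.card_ne_zero
  -- the invertible perturbation `f ↦ L f + (∑ f) · 1` of the Laplacian
  let T : (V → ℚ) →ₗ[ℚ] (V → ℚ) :=
    G.lap + (LinearMap.pi fun _ => ∑ v, LinearMap.proj v)
  have hT : ∀ f v, T f v = G.lap f v + ∑ u, f u := by
    intro f v
    simp [T]
  have hsum : ∀ f, ∑ v, T f v = Fintype.card V * ∑ u, f u := by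
    intro f
    simp only [hT, Finset.sum_add_distrib, sum_lap, Finset.sum_const, Finset.card_univ,
      nsmul_eq_mul, zero_add]
  have hlap : ∀ f, ∑ v, T f v = 0 → ∑ u, f u = 0 ∧ G.lap f = T f := by
    intro f hf
    rw [hsum] at hf
    have h0 := (mul_eq_zero.1 hf).resolve_left hn
    exact ⟨h0, funext fun v => by rw [hT, h0, add_zero]⟩
  have hinj : Function.Injective T := by
    rw [injective_iff_map_eq_zero]
    intro f hf
    obtain ⟨h0, h1⟩ := hlap f (by simp [hf])
    obtain ⟨c, hc⟩ := G.eq_of_lap_eq_zero hG f (h1.trans hf)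
    simp only [hc, Finset.sum_const, Finset.card_univ, nsmul_eq_mul] at h0
    have hc0 := (mul_eq_zero.1 h0).resolve_left hn
    exact funext fun v => by rw [hc, hc0, Pi.zero_apply]
  obtain ⟨f, hf⟩ := LinearMap.injective_iff_surjective.1 hinj h
  exact ⟨f, (hlap f (by rw [hf, hh])).2.trans hf⟩

lemma sum_chip_apply {V : Type*} [Fintype V] [DecidableEq V] (G : Multigraph V)
    (c : V → ℤ) (u : V) :
    (((∑ v, c v • G.chip v) u : ℤ) : ℚ) = -G.lap (fun v => (c v : ℚ)) u := by
  have hu := Finset.mem_univ u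
  rw [Finset.sum_apply, lap_apply, ← Finset.add_sum_erase _ _ hu,
    ← Finset.add_sum_erase Finset.univ (fun w => (G.m u w : ℚ) * ((c u : ℚ) - c w)) hu]
  have h1 : ∑ v ∈ Finset.univ.erase u, (c v • G.chip v) u
      = ∑ v ∈ Finset.univ.erase u, c v * (G.m u v : ℤ) := by
    refine Finset.sum_congr rfl fun v hv => ?_
    rw [Pi.smul_apply, smul_eq_mul, chip, if_neg (Finset.ne_of_mem_erase hv).symm, G.symm v u]
  rw [h1, Pi.smul_apply, smul_eq_mul, chip, if_pos rfl]
  push_cast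
  rw [sub_self, mul_zero, zero_add, mul_neg, Finset.mul_sum, ← Finset.sum_neg_distrib,
    ← Finset.sum_add_distrib, ← Finset.sum_neg_distrib]
  exact Finset.sum_congr rfl fun v _ => by ring

/-- Handshake bound. The slack `1` accounts for the truncated division in `numEdges`, so that
the parity of the sum of multiplicities plays no role. -/
lemma sum_val_le {V : Type*} [Fintype V] [DecidableEq V] (G : Multigraph V) :
    ∑ v, G.val v ≤ 2 * G.numEdges + 1 := by
  simp only [val, numEdges, Finset.sum_add_distrib, ← Finset.mul_sum]
  omega

lemma neg_val_le_lap {V : Type*} [Fintype V] [DecidableEq V] (G : Multigraph V) (f : V → ℚ)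
    (h0 : ∀ v, 0 ≤ f v) (h1 : ∀ v, f v ≤ 1) (u : V) : -(G.val u : ℚ) ≤ G.lap f u := by
  rw [lap_apply, ← Finset.add_sum_erase _ _ (Finset.mem_univ u), val]
  have h : -∑ w ∈ Finset.univ.erase u, (G.m u w : ℚ)
      ≤ ∑ w ∈ Finset.univ.erase u, (G.m u w : ℚ) * (f u - f w) := by
    rw [← Finset.sum_neg_distrib]
    refine Finset.sum_le_sum fun w _ => ?_
    have hm : (0 : ℚ) ≤ G.m u w := Nat.cast_nonneg _
    nlinarith [h0 u, h1 w]
  have hl : (0 : ℚ) ≤ G.m u u := Nat.cast_nonneg _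
  push_cast
  linarith

end Multigraph

/-- If `deg D ≥ 2·C_G`, then `D` is linearly equivalent to an effective divisor
`E` with `E(v) ≥ val(v)` for every vertex `v`. -/
theorem exists_effective_ge_val {V : Type*} [Fintype V] [DecidableEq V]
    (G : Multigraph V) (hG : G.Connected) (D : V → ℤ)
    (hD : 2 * ((2 * (G.numEdges + 1) * (Fintype.card V + 1) : ℕ) : ℤ) ≤ divDeg D) :
    ∃ E : V → ℤ, divEffective E ∧ G.LinEquiv E D ∧ ∀ v, (G.val v : ℤ) ≤ E v := by
  have := hG.nonempty
  have hn : (0 : ℚ) < Fintype.card V := by exact_mod_cast Fintype.card_pos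
  have hdeg : 2 * ∑ v, (G.val v : ℚ) ≤ ∑ v, (D v : ℚ) := by
    have h1 := G.sum_val_le
    have h2 : 2 * ∑ v, G.val v ≤ 2 * (2 * (G.numEdges + 1) * (Fintype.card V + 1)) := by
      nlinarith [Nat.zero_le (G.numEdges * Fintype.card V), Nat.zero_le (Fintype.card V)]
    have h3 : ((2 * ∑ v, G.val v : ℕ) : ℤ) ≤ ∑ v, D v := by
      refine le_trans ?_ hD
      exact_mod_cast h2
    exact_mod_cast h3
  -- the surplus of `deg D` over `2 ∑ val`, shared equally among the vertices
  set s : ℚ := (∑ v, (D v : ℚ) - 2 * ∑ v, (G.val v : ℚ)) / Fintype.card V with hs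
  have hs0 : 0 ≤ s := div_nonneg (by linarith) hn.le
  obtain ⟨f, hf⟩ := G.exists_lap_eq hG (fun v => (D v : ℚ) - (2 * G.val v + s)) (by
    simp only [Finset.sum_sub_distrib, Finset.sum_add_distrib, ← Finset.mul_sum,
      Finset.sum_const, Finset.card_univ, nsmul_eq_mul]
    rw [hs, mul_div_cancel₀ _ hn.ne']
    ring)
  have key : ∀ v, (G.val v : ℤ) ≤ (D + ∑ v, ⌊f v⌋ • G.chip v) v := by
    intro v
    have h1 := G.neg_val_le_lap (fun w => f w - ⌊f w⌋) (fun w => sub_nonneg.2 (Int.floor_le _))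
      (fun w => by linarith [Int.lt_floor_add_one (f w)]) v
    have h2 : G.lap (fun w => f w - ⌊f w⌋) v
        = G.lap f v - G.lap (fun w => (⌊f w⌋ : ℚ)) v := by
      have := congrFun (map_sub G.lap f (fun w => (⌊f w⌋ : ℚ))) v
      exact this
    have h3 := G.sum_chip_apply (fun w => ⌊f w⌋) v
    have h4 := congrFun hf v
    have h5 : ((G.val v : ℤ) : ℚ) ≤ (((D + ∑ v, ⌊f v⌋ • G.chip v) v : ℤ) : ℚ) := by
      rw [Pi.add_apply, Int.cast_add, h3, Int.cast_natCast]
      linarith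
    exact_mod_cast h5
  refine ⟨D + ∑ v, ⌊f v⌋ • G.chip v, fun v => le_trans (by positivity) (key v), ?_, key⟩
  rw [Multigraph.LinEquiv, add_sub_cancel_left]
  exact sum_mem fun v _ => G.prin.zsmul_mem (AddSubgroup.subset_closure (Set.mem_range_self v)) _
end
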